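/- arXiv:2604.06122 — 4 statements merged into one kernel-verified Lean document; each statement's English description precedes it below -/
import Mathlib

section
/- Fix ε ∈ (0,1/2) and m ∈ [−1+2ε, 1−2ε]. If h ∈ L^ε_n and λ > 0, then (4/(n⁶ε⁴))·(Γ_n(h) + M_n(h,λ) − λM'_n(h,λ))² ≤ 2π M''_n(h,λ) ≤ n^{3/2}. Moreover, for any λ, λ' ∈ ℝ, |M''_n(h,λ) − M''_n(h,λ')| ≤ 2(Σ_{i=1}^n |h_i|³)·|λ − λ'|. -/
open MeasureTheory Real Filter Set
open scoped Topology BigOperators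

noncomputable section

/-- `g(λ) = log(((1+m)/2)e^{λ(1−m)} + ((1−m)/2)e^{−λ(1+m)})`. -/
def gfun (m lam : ℝ) : ℝ :=
  Real.log ((1 + m) / 2 * Real.exp (lam * (1 - m)) + (1 - m) / 2 * Real.exp (-(lam * (1 + m))))

/-- `M_n(h,λ) = Σ_{i=1}^n g(λ h_i)`. -/
def Mn (m : ℝ) (n : ℕ) (hs : ℕ → ℝ) (lam : ℝ) : ℝ :=
  ∑ i ∈ Finset.range n, gfun m (lam * hs i)

/-- `Σ_n(h) = −m Σ_{i=1}^n h_i + Σ_{i=1}^n |h_i|`. -/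
def SigmaN (m : ℝ) (n : ℕ) (hs : ℕ → ℝ) : ℝ :=
  -m * ∑ i ∈ Finset.range n, hs i + ∑ i ∈ Finset.range n, |hs i|

/-- `Γ_n(h) = −Σ_{i=1}^n log(1 + sign(h_i) m) + n log 2`. -/
def GammaN (m : ℝ) (n : ℕ) (hs : ℕ → ℝ) : ℝ :=
  -(∑ i ∈ Finset.range n, Real.log (1 + Real.sign (hs i) * m)) + n * Real.log 2

/-- The set `L^ε_n` of good disorder configurations. -/
def Lset (m ε : ℝ) (n : ℕ) : Set (ℕ → ℝ) :=
  {hs | 2 * π * ∑ i ∈ Finset.range n, (hs i) ^ 2 ≤ (n : ℝ) ^ ((3:ℝ)/2) ∧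
    (∀ i < n, 16 / ((n : ℝ)^5 * ε^8) ≤ 2 * π * (hs i)^2) ∧
    SigmaN m n hs ∈ Set.Ioo ((n : ℝ) ^ ((4:ℝ)/5)) ((n : ℝ) ^ ((3:ℝ)/2))}

def DD (p q x : ℝ) : ℝ := p * Real.exp x + q * Real.exp (-x)

def TT (p q x : ℝ) : ℝ := (p * Real.exp x - q * Real.exp (-x)) / DD p q x

lemma DD_pos {p q : ℝ} (hp : 0 < p) (hq : 0 < q) (x : ℝ) : 0 < DD p q x := by
  unfold DD; positivity

lemma TT_abs {p q : ℝ} (hp : 0 < p) (hq : 0 < q) (x : ℝ) : |TT p q x| ≤ 1 := by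
  have h := DD_pos hp hq x
  unfold TT
  rw [abs_div, abs_of_pos h, div_le_one h, abs_le]
  unfold DD
  have h1 : 0 < p * Real.exp x := by positivity
  have h2 : 0 < q * Real.exp (-x) := by positivity
  constructor <;> linarith

lemma DD_deriv (p q x : ℝ) :
    HasDerivAt (DD p q) (p * Real.exp x - q * Real.exp (-x)) x := by
  have h1 := (Real.hasDerivAt_exp x).const_mul p
  have h2 := ((hasDerivAt_neg x).exp).const_mul q
  have h3 := h1.add h2
  refine h3.congr_deriv ?_
  ring

lemma TT_deriv {p q : ℝ} (hp : 0 < p) (hq : 0 < q) (x : ℝ) :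
    HasDerivAt (TT p q) (1 - TT p q x ^ 2) x := by
  have h := (DD_pos hp hq x).ne'
  have h1 := (Real.hasDerivAt_exp x).const_mul p
  have h2 := ((hasDerivAt_neg x).exp).const_mul q
  have h3 := (h1.sub h2).div (DD_deriv p q x) h
  refine h3.congr_deriv ?_
  unfold TT
  simp only [Pi.sub_apply]
  field_simp
  unfold DD
  ring

lemma gfun_eq (m : ℝ) (h1 : 0 < (1 + m) / 2) (h2 : 0 < (1 - m) / 2) (x : ℝ) :
    gfun m x = -m * x + Real.log (DD ((1 + m) / 2) ((1 - m) / 2) x) := by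
  have h := DD_pos h1 h2 x
  unfold gfun
  have e : (1 + m) / 2 * Real.exp (x * (1 - m)) + (1 - m) / 2 * Real.exp (-(x * (1 + m)))
      = Real.exp (-m * x) * DD ((1 + m) / 2) ((1 - m) / 2) x := by
    unfold DD
    have e1 : x * (1 - m) = -m * x + x := by ring
    have e2 : -(x * (1 + m)) = -m * x + -x := by ring
    rw [e1, e2, Real.exp_add, Real.exp_add]; ring
  rw [e, Real.log_mul (Real.exp_pos _).ne' h.ne', Real.log_exp]

lemma gfun_deriv (m : ℝ) (h1 : 0 < (1 + m) / 2) (h2 : 0 < (1 - m) / 2) (x : ℝ) :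
    HasDerivAt (gfun m) (-m + TT ((1 + m) / 2) ((1 - m) / 2) x) x := by
  have e : gfun m = fun x => -m * x + Real.log (DD ((1 + m) / 2) ((1 - m) / 2) x) :=
    funext (gfun_eq m h1 h2)
  rw [e]
  have h3 := (DD_deriv ((1 + m) / 2) ((1 - m) / 2) x).log (DD_pos h1 h2 x).ne'
  have h4 := ((hasDerivAt_id x).const_mul (-m)).add h3
  refine h4.congr_deriv ?_
  unfold TT
  ring

lemma TT_lip {p q : ℝ} (hp : 0 < p) (hq : 0 < q) (x y : ℝ) :
    |TT p q x - TT p q y| ≤ |x - y| := by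
  have h := Convex.norm_image_sub_le_of_norm_hasDerivWithin_le (f := TT p q)
    (f' := fun x => 1 - TT p q x ^ 2) (C := 1) (s := Set.univ) (x := y) (y := x)
    (fun z _ => (TT_deriv hp hq z).hasDerivWithinAt) (fun z _ => by
      have := (sq_le_one_iff_abs_le_one _).2 (TT_abs hp hq z)
      rw [Real.norm_eq_abs, abs_le]
      constructor <;> nlinarith [sq_nonneg (TT p q z)]) convex_univ trivial trivial
  simpa using h

lemma TT_sq_lip {p q : ℝ} (hp : 0 < p) (hq : 0 < q) (x y : ℝ) :
    |TT p q x ^ 2 - TT p q y ^ 2| ≤ 2 * |x - y| := by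
  have h1 := TT_lip hp hq x y
  have h2 : |TT p q x + TT p q y| ≤ 2 := by
    have := abs_add_le (TT p q x) (TT p q y)
    linarith [TT_abs hp hq x, TT_abs hp hq y]
  rw [sq_sub_sq, abs_mul]
  exact mul_le_mul h2 h1 (abs_nonneg _) (by norm_num)

lemma K_bound {p q ε x : ℝ} (hε : 0 < ε) (hε1 : ε < 1) (hp : ε ≤ p) (hq : ε ≤ q)
    (hpq : p + q = 1) (hx : 0 < x) :
    ε ^ 4 * (-Real.log p + Real.log (DD p q x) - x * TT p q x) ^ 2
      ≤ 4 * (1 - TT p q x ^ 2) := by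
  have hp0 : 0 < p := by linarith
  have hq0 : 0 < q := by linarith
  obtain ⟨a, ha, haq⟩ : ∃ a : ℝ, 0 < a ∧ a ^ 2 * p = q := by
    refine ⟨Real.sqrt (q / p), by positivity, ?_⟩
    rw [Real.sq_sqrt (by positivity)]; field_simp
  obtain ⟨s, hs⟩ : ∃ s, s = a * Real.exp (-x) := ⟨_, rfl⟩
  have hs0 : 0 < s := by rw [hs]; positivity
  have hee : Real.exp (-x) * Real.exp x = 1 := by rw [← Real.exp_add]; simp
  have hqe : q * Real.exp (-x) = p * Real.exp x * s ^ 2 := by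
    rw [hs, ← haq]
    linear_combination (-(a ^ 2 * p * Real.exp (-x))) * hee
  have hD : DD p q x = p * Real.exp x * (1 + s ^ 2) := by
    unfold DD; rw [hqe]; ring
  have hT : TT p q x = (1 - s ^ 2) / (1 + s ^ 2) := by
    unfold TT; rw [hD, hqe]; field_simp
  have hlog : Real.log (DD p q x) = Real.log p + x + Real.log (1 + s ^ 2) := by
    rw [hD, Real.log_mul (by positivity) (by positivity),
      Real.log_mul (by positivity) (by positivity), Real.log_exp]
  have hK : -Real.log p + Real.log (DD p q x) - x * TT p q x
      = Real.log (1 + s ^ 2) + 2 * (x * s) * s / (1 + s ^ 2) := by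
    rw [hlog, hT]; field_simp; ring
  have hl0 : 0 ≤ Real.log (1 + s ^ 2) := Real.log_nonneg (by nlinarith)
  have hl1 : Real.log (1 + s ^ 2) ≤ 2 * s := by
    have h1 : Real.log (1 + s ^ 2) ≤ Real.log ((1 + s) ^ 2) :=
      Real.log_le_log (by positivity) (by nlinarith)
    have h2 := Real.log_le_sub_one_of_pos (show 0 < 1 + s by positivity)
    rw [Real.log_pow] at h1
    push_cast at h1
    linarith
  have he1 : Real.exp (-x) ≤ 1 := Real.exp_le_one_iff.2 (by linarith)
  have hxe : x * Real.exp (-x) ≤ 1 := by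
    have := Real.add_one_le_exp x
    have h3 := Real.exp_pos (-x)
    nlinarith
  have haε : ε * a ≤ 1 := by
    have h1 : (ε * a) ^ 2 ≤ 1 := by
      have : ε * a ^ 2 ≤ 1 := by nlinarith [sq_nonneg a]
      nlinarith [sq_nonneg a]
    nlinarith [mul_pos hε ha]
  have hxs : ε * (x * s) ≤ 1 := by
    rw [hs]
    calc ε * (x * (a * Real.exp (-x))) = (ε * a) * (x * Real.exp (-x)) := by ring
      _ ≤ 1 * 1 := by gcongr
      _ = 1 := by norm_num
  have hsε : ε * (1 + s ^ 2) ≤ 1 := by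
    have h1 : s ^ 2 ≤ a ^ 2 := by
      have : s ≤ a := by rw [hs]; nlinarith
      gcongr
    have : ε * (1 + s ^ 2) ≤ p * (1 + a ^ 2) := by gcongr
    nlinarith
  have hpos : 0 ≤ Real.log (1 + s ^ 2) + 2 * (x * s) * s / (1 + s ^ 2) := by positivity
  have hmain : ε ^ 2 * (Real.log (1 + s ^ 2) + 2 * (x * s) * s / (1 + s ^ 2))
      ≤ 4 * s / (1 + s ^ 2) := by
    rw [le_div_iff₀ (by positivity)]
    have : ε ^ 2 * (Real.log (1 + s ^ 2) + 2 * (x * s) * s / (1 + s ^ 2)) * (1 + s ^ 2)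
        = ε * (ε * (1 + s ^ 2)) * Real.log (1 + s ^ 2) + 2 * ε * (ε * (x * s)) * s := by
      field_simp
    rw [this]
    calc _ ≤ 1 * 1 * (2 * s) + 2 * 1 * 1 * s := by gcongr
      _ = 4 * s := by ring
  rw [hK, hT]
  have h5 := pow_le_pow_left₀ (by positivity) hmain 2
  calc _ = (ε ^ 2 * (Real.log (1 + s ^ 2) + 2 * (x * s) * s / (1 + s ^ 2))) ^ 2 := by ring
    _ ≤ _ := h5
    _ = _ := by field_simp; ring

lemma DD_swap (p q x : ℝ) : DD p q x = DD q p (-x) := by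
  unfold DD; rw [neg_neg]; ring

lemma TT_swap (p q x : ℝ) : TT p q x = -TT q p (-x) := by
  unfold TT; rw [← DD_swap, neg_neg]; ring

lemma term_bound {ε m x : ℝ} (hε : 0 < ε) (hε1 : ε < 1 / 2)
    (h1 : ε ≤ (1 + m) / 2) (h2 : ε ≤ (1 - m) / 2) (hx : x ≠ 0) :
    ε ^ 4 * (-Real.log (1 + Real.sign x * m) + Real.log 2 + gfun m x
        - x * (-m + TT ((1 + m) / 2) ((1 - m) / 2) x)) ^ 2
      ≤ 4 * (1 - TT ((1 + m) / 2) ((1 - m) / 2) x ^ 2) := by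
  rw [gfun_eq m (by linarith) (by linarith)]
  rcases lt_or_gt_of_ne hx with h | h
  · have := K_bound hε (by linarith) h2 h1 (by ring) (neg_pos.2 h)
    rw [Real.sign_of_neg h, DD_swap, TT_swap]
    rw [Real.log_div (by linarith) (by norm_num)] at this
    convert this using 2
    · congr 1; ring_nf
    · ring
  · have := K_bound hε (by linarith) h1 h2 (by ring) h
    rw [Real.sign_of_pos h]
    rw [Real.log_div (by linarith) (by norm_num)] at this
    convert this using 2
    congr 1; ring_nf

lemma Mn_deriv (m : ℝ) (h1 : 0 < (1 + m) / 2) (h2 : 0 < (1 - m) / 2) (n : ℕ) (hs : ℕ → ℝ) :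
    deriv (Mn m n hs) = fun lam => ∑ i ∈ Finset.range n,
      (-m + TT ((1 + m) / 2) ((1 - m) / 2) (lam * hs i)) * hs i := by
  funext lam
  apply HasDerivAt.deriv
  unfold Mn
  apply HasDerivAt.fun_sum
  intro i _
  have h3 : HasDerivAt (fun l : ℝ => l * hs i) (hs i) lam := by
    simpa using (hasDerivAt_id lam).mul_const (hs i)
  have h4 := (gfun_deriv m h1 h2 (lam * hs i)).comp lam h3
  exact h4

lemma Mn_deriv2 (m : ℝ) (h1 : 0 < (1 + m) / 2) (h2 : 0 < (1 - m) / 2) (n : ℕ) (hs : ℕ → ℝ) :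
    deriv (deriv (Mn m n hs)) = fun lam => ∑ i ∈ Finset.range n,
      (1 - TT ((1 + m) / 2) ((1 - m) / 2) (lam * hs i) ^ 2) * hs i ^ 2 := by
  rw [Mn_deriv m h1 h2]
  funext lam
  apply HasDerivAt.deriv
  apply HasDerivAt.fun_sum
  intro i _
  have h3 : HasDerivAt (fun l : ℝ => l * hs i) (hs i) lam := by
    simpa using (hasDerivAt_id lam).mul_const (hs i)
  have h4 := (((TT_deriv h1 h2 (lam * hs i)).comp lam h3).const_add (-m)).mul_const (hs i)
  refine h4.congr_deriv ?_
  ring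

/-- bounds on `M''_n` for `h ∈ L^ε_n`, and the Lipschitz estimate for `M''_n`. -/
theorem stmt8 (ε m : ℝ) (hε : ε ∈ Set.Ioo (0 : ℝ) (1/2))
    (hm : m ∈ Set.Icc (-1 + 2*ε) (1 - 2*ε)) (n : ℕ) (hs : ℕ → ℝ)
    (hL : hs ∈ Lset m ε n) :
    (∀ lam : ℝ, 0 < lam →
      4 / ((n : ℝ)^6 * ε^4) *
          (GammaN m n hs + Mn m n hs lam - lam * deriv (Mn m n hs) lam)^2 ≤
        2 * π * deriv (deriv (Mn m n hs)) lam ∧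
      2 * π * deriv (deriv (Mn m n hs)) lam ≤ (n : ℝ) ^ ((3:ℝ)/2)) ∧
    (∀ lam lam' : ℝ,
      |deriv (deriv (Mn m n hs)) lam - deriv (deriv (Mn m n hs)) lam'| ≤
        2 * (∑ i ∈ Finset.range n, |hs i|^3) * |lam - lam'|) := by
  obtain ⟨hε0, hε1⟩ := hε
  obtain ⟨hm1, hm2⟩ := hm
  obtain ⟨hL1, hL2, -⟩ := hL
  have h1 : ε ≤ (1 + m) / 2 := by linarith
  have h2 : ε ≤ (1 - m) / 2 := by linarith
  have h1' : 0 < (1 + m) / 2 := by linarith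
  have h2' : 0 < (1 - m) / 2 := by linarith
  rw [Mn_deriv2 m h1' h2', Mn_deriv m h1' h2']
  refine ⟨fun lam hlam => ⟨?_, ?_⟩, fun lam lam' => ?_⟩
  · simp only
    rcases Nat.eq_zero_or_pos n with rfl | hn
    · simp
    have hn' : (0 : ℝ) < n := by exact_mod_cast hn
    set f : ℕ → ℝ := fun i => -Real.log (1 + Real.sign (lam * hs i) * m) + Real.log 2
      + gfun m (lam * hs i)
      - (lam * hs i) * (-m + TT ((1 + m) / 2) ((1 - m) / 2) (lam * hs i)) with hf
    have hsum : GammaN m n hs + Mn m n hs lam - lam * (∑ i ∈ Finset.range n,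
        (-m + TT ((1 + m) / 2) ((1 - m) / 2) (lam * hs i)) * hs i)
        = ∑ i ∈ Finset.range n, f i := by
      have hsg : ∀ i, Real.sign (lam * hs i) = Real.sign (hs i) := by
        intro i
        rcases lt_trichotomy (hs i) 0 with h | h | h
        · rw [Real.sign_of_neg h, Real.sign_of_neg (mul_neg_of_pos_of_neg hlam h)]
        · simp [h]
        · rw [Real.sign_of_pos h, Real.sign_of_pos (mul_pos hlam h)]
      simp only [hf, hsg, GammaN, Mn, Finset.sum_sub_distrib, Finset.sum_add_distrib,
        Finset.sum_neg_distrib, Finset.sum_const, Finset.card_range, nsmul_eq_mul, Finset.mul_sum]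
      congr 1
      apply Finset.sum_congr rfl
      intro i _
      ring
    rw [hsum]
    have hcs := sq_sum_le_card_mul_sum_sq (s := Finset.range n) (f := f)
    rw [Finset.card_range] at hcs
    calc 4 / ((n : ℝ)^6 * ε^4) * (∑ i ∈ Finset.range n, f i) ^ 2
        ≤ 4 / ((n : ℝ)^6 * ε^4) * (n * ∑ i ∈ Finset.range n, f i ^ 2) := by gcongr
      _ = ∑ i ∈ Finset.range n, 4 / ((n : ℝ)^5 * ε^8) * (ε ^ 4 * f i ^ 2) := by
          rw [← Finset.mul_sum, ← Finset.mul_sum]; field_simp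
      _ ≤ ∑ i ∈ Finset.range n, 2 * π * ((1 - TT ((1 + m) / 2) ((1 - m) / 2) (lam * hs i) ^ 2)
            * hs i ^ 2) := by
          apply Finset.sum_le_sum
          intro i hi
          have hi' := hL2 i (Finset.mem_range.1 hi)
          have hh : hs i ≠ 0 := by
            intro h0
            rw [h0] at hi'
            have : 0 < 16 / ((n : ℝ)^5 * ε^8) := by positivity
            norm_num at hi'
            linarith
          have ht := term_bound hε0 hε1 h1 h2 (mul_ne_zero hlam.ne' hh)
          have hT := (sq_le_one_iff_abs_le_one _).2 (TT_abs h1' h2' (lam * hs i))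
          calc _ ≤ 4 / ((n : ℝ)^5 * ε^8) *
                (4 * (1 - TT ((1 + m) / 2) ((1 - m) / 2) (lam * hs i) ^ 2)) := by
                gcongr
            _ = 16 / ((n : ℝ)^5 * ε^8) *
                (1 - TT ((1 + m) / 2) ((1 - m) / 2) (lam * hs i) ^ 2) := by ring
            _ ≤ 2 * π * (hs i)^2 * (1 - TT ((1 + m) / 2) ((1 - m) / 2) (lam * hs i) ^ 2) :=
                mul_le_mul_of_nonneg_right hi' (by linarith)
            _ = _ := by ring
      _ = _ := by rw [Finset.mul_sum]
  · refine le_trans ?_ hL1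
    simp only
    gcongr with i hi
    nlinarith [mul_nonneg (sq_nonneg (TT ((1 + m) / 2) ((1 - m) / 2) (lam * hs i)))
      (sq_nonneg (hs i))]
  · simp only
    rw [← Finset.sum_sub_distrib, Finset.mul_sum, Finset.sum_mul]
    refine (Finset.abs_sum_le_sum_abs _ _).trans (Finset.sum_le_sum fun i _ => ?_)
    have h := TT_sq_lip h1' h2' (lam * hs i) (lam' * hs i)
    rw [← sub_mul, abs_mul] at h
    rw [← sub_mul, abs_mul, abs_pow]
    rw [show ∀ a b : ℝ, (1 - a) - (1 - b) = -(a - b) by intros; ring, abs_neg]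
    calc _ ≤ 2 * (|lam - lam'| * |hs i|) * |hs i| ^ 2 := by gcongr
      _ = _ := by ring
end
end

section
/- Fix ε ∈ (0,1/2) and m ∈ [−1+2ε, 1−2ε], and let N_ε be as in the lemma guaranteeing C⁻_n > 0 and Γ_n(h) − C⁺_n ≥ ε²n/2 (e.g. N_ε = −log(ε)/ε⁵ + 100). For n > N_ε, C ∈ (εΓ_n(h), (1−ε)Γ_n(h)), C⁺_n = C + 2 log n, C⁻_n = C − (3/4) log n, define A⁺_n(h) = A_n(h, C⁺_n) and A⁻_n(h) = A_n(h, C⁻_n). Then for every n > N_ε and every h ∈ L^ε_n, |A⁺_n(h) − A⁻_n(h)| ≤ n^{3/4}·√(log n). -/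
open MeasureTheory Real Filter Set
open scoped Topology BigOperators

noncomputable section

/-- `M*_n(h,a) = sup_{λ∈ℝ}(λa − M_n(h,λ))`. -/
def MstarN (m : ℝ) (n : ℕ) (hs : ℕ → ℝ) (a : ℝ) : ℝ :=
  ⨆ lam : ℝ, (lam * a - Mn m n hs lam)

theorem gfun_nonneg_aux (m lam : ℝ) (h1 : -1 < m) (h2 : m < 1) : 0 ≤ gfun m lam := by
  unfold gfun
  apply Real.log_nonneg
  have e1 := Real.add_one_le_exp (lam * (1 - m))
  have e2 := Real.add_one_le_exp (-(lam * (1 + m)))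
  have f1 := mul_le_mul_of_nonneg_left e1 (by linarith : 0 ≤ (1 + m) / 2)
  have f2 := mul_le_mul_of_nonneg_left e2 (by linarith : 0 ≤ (1 - m) / 2)
  nlinarith

theorem Mn_nonneg_aux (m : ℝ) (n : ℕ) (hs : ℕ → ℝ) (lam : ℝ) (h1 : -1 < m) (h2 : m < 1) :
    0 ≤ Mn m n hs lam :=
  Finset.sum_nonneg fun _ _ => gfun_nonneg_aux _ _ h1 h2

theorem Mstar_aux (m : ℝ) (n : ℕ) (hs : ℕ → ℝ) (h1 : -1 < m) (h2 : m < 1) (a b : ℝ)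
    (ha : 0 < a) (hab : a ≤ b) (hb : 0 < MstarN m n hs b) :
    b * MstarN m n hs a ≤ a * MstarN m n hs b := by
  have hb0 : 0 < b := ha.trans_le hab
  have hbdd : BddAbove (Set.range fun lam : ℝ => lam * b - Mn m n hs lam) := by
    by_contra hc
    unfold MstarN at hb
    rw [Real.iSup_of_not_bddAbove hc] at hb
    exact lt_irrefl _ hb
  have key : MstarN m n hs a ≤ a * MstarN m n hs b / b := by
    refine ciSup_le fun lam => ?_
    have hl : lam * b - Mn m n hs lam ≤ MstarN m n hs b := le_ciSup hbdd lam
    rw [le_div_iff₀ hb0]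
    have := mul_le_mul_of_nonneg_left hl ha.le
    have hM := mul_nonneg (sub_nonneg.2 hab) (Mn_nonneg_aux m n hs lam h1 h2)
    nlinarith
  rw [le_div_iff₀ hb0] at key
  linarith

theorem GammaN_lower_aux (ε m : ℝ) (hε : ε ∈ Set.Ioo (0 : ℝ) (1/2))
    (hm : m ∈ Set.Icc (-1 + 2*ε) (1 - 2*ε)) (n : ℕ) (hs : ℕ → ℝ) :
    ε * n ≤ GammaN m n hs := by
  obtain ⟨h0, h1⟩ := hε
  obtain ⟨h2, h3⟩ := hm
  have : ∀ i ∈ Finset.range n, Real.log (1 + Real.sign (hs i) * m) ≤ Real.log 2 - ε := by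
    intro i _
    have hx : 0 < 1 + Real.sign (hs i) * m ∧ 1 + Real.sign (hs i) * m ≤ 2 * (1 - ε) := by
      rcases Real.sign_apply_eq (hs i) with h | h | h <;> rw [h] <;> constructor <;> linarith
    calc _ ≤ Real.log (2 * (1 - ε)) := Real.log_le_log hx.1 hx.2
      _ = Real.log 2 + Real.log (1 - ε) := Real.log_mul (by norm_num) (by linarith)
      _ ≤ _ := by
        have := Real.log_le_sub_one_of_pos (show 0 < 1 - ε by linarith)
        linarith
  have hsum := Finset.sum_le_sum this
  simp only [Finset.sum_const, Finset.card_range, nsmul_eq_mul] at hsum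
  unfold GammaN
  linarith

theorem stmt11 (ε m : ℝ) (hε : ε ∈ Set.Ioo (0 : ℝ) (1/2))
    (hm : m ∈ Set.Icc (-1 + 2*ε) (1 - 2*ε)) :
    ∃ N : ℝ, 0 < N ∧ ∀ n : ℕ, N < n → ∀ hs ∈ Lset m ε n, ∀ C : ℝ,
      C ∈ Set.Ioo (ε * GammaN m n hs) ((1 - ε) * GammaN m n hs) →
      ∀ A : ℝ → ℝ,
        (∀ c ∈ Set.Ioo 0 (GammaN m n hs),
          A c ∈ Set.Ioo 0 (SigmaN m n hs) ∧ MstarN m n hs (A c) = c) →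
        |A (C + 2 * Real.log n) - A (C - 3/4 * Real.log n)| ≤
          (n : ℝ) ^ ((3:ℝ)/4) * Real.sqrt (Real.log n) := by
  have h0 := hε.1
  have hlo1 := (isLittleO_log_rpow_atTop (show (0:ℝ) < 1/2 by norm_num)).bound
    (show 0 < (2 * ε ^ 2 / 11) ^ 2 by positivity)
  have hlo2 := (isLittleO_log_rpow_atTop (show (0:ℝ) < 1 by norm_num)).bound
    (show 0 < ε ^ 2 / 4 by positivity)
  obtain ⟨N₀, hN₀⟩ := Filter.eventually_atTop.1 (hlo1.and hlo2)
  refine ⟨max N₀ 1, by positivity, ?_⟩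
  intro n hn hs hL C hC A hA
  obtain ⟨hb1, hb2⟩ := hN₀ n ((le_max_left _ _).trans hn.le)
  have hn1 : (1:ℝ) < n := (le_max_right _ _).trans_lt hn
  have hnp : (0:ℝ) < n := by linarith
  have hlog : 0 < Real.log n := Real.log_pos hn1
  rw [Real.norm_of_nonneg hlog.le, Real.norm_of_nonneg (by positivity)] at hb1 hb2
  rw [Real.rpow_one] at hb2
  have hΓ := GammaN_lower_aux ε m hε hm n hs
  have hεΓ : ε ^ 2 * n ≤ ε * GammaN m n hs := by nlinarith
  obtain ⟨hC1, hC2⟩ := hC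
  have hm1 : -1 < m := by linarith [hm.1]
  have hm2 : m < 1 := by linarith [hm.2]
  set L := Real.log n with hLdef
  have hε2 : 0 < ε ^ 2 * n := by positivity
  have hCm : ε ^ 2 * n / 2 ≤ C - 3/4 * L := by linarith
  obtain ⟨⟨hp0, hp1⟩, hp2⟩ := hA (C + 2 * L) ⟨by linarith, by linarith⟩
  obtain ⟨⟨hq0, hq1⟩, hq2⟩ := hA (C - 3/4 * L) ⟨by linarith, by linarith⟩
  set b := A (C + 2 * L)
  set a := A (C - 3/4 * L)
  have hab : a ≤ b := by
    by_contra hlt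
    push Not at hlt
    have := Mstar_aux m n hs hm1 hm2 b a hp0 hlt.le (by rw [hq2]; linarith)
    rw [hp2, hq2] at this
    nlinarith
  have hk := Mstar_aux m n hs hm1 hm2 a b hq0 hab (by rw [hp2]; linarith)
  rw [hp2, hq2] at hk
  rw [abs_of_nonneg (by linarith)]
  have hS : a ≤ (n:ℝ) ^ ((3:ℝ)/2) := (hq1.trans hL.2.2.2).le
  have h1 : (b - a) * (ε ^ 2 * n / 2) ≤ (n:ℝ) ^ ((3:ℝ)/2) * (11/4 * L) := by
    have := mul_le_mul_of_nonneg_left hCm (sub_nonneg.2 hab)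
    have := mul_le_mul_of_nonneg_right hS (show 0 ≤ 11/4 * L by linarith)
    nlinarith
  set x := (n:ℝ) ^ ((1:ℝ)/4) with hx
  have hxp : 0 < x := by positivity
  have ex : ∀ k : ℕ, (n:ℝ) ^ ((k:ℝ)/4) = x ^ k := by
    intro k
    rw [hx, ← Real.rpow_natCast, ← Real.rpow_mul hnp.le]
    congr 1; ring
  have e2 : (n:ℝ) ^ ((1:ℝ)/2) = x ^ 2 := by rw [← ex]; norm_num
  have e3 : (n:ℝ) ^ ((3:ℝ)/4) = x ^ 3 := by rw [← ex]; norm_num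
  have e6 : (n:ℝ) ^ ((3:ℝ)/2) = x ^ 6 := by rw [← ex]; norm_num
  have e4 : (n:ℝ) = x ^ 4 := by rw [← ex]; norm_num
  rw [e2] at hb1
  rw [e6, e4] at h1
  rw [e3]
  set s := Real.sqrt L
  have hs2 : s ^ 2 = L := Real.sq_sqrt hlog.le
  have hs0 : 0 ≤ s := Real.sqrt_nonneg _
  have hsx : s ≤ 2 * ε ^ 2 / 11 * x := by
    apply Real.sqrt_le_iff.2
    exact ⟨by positivity, by rw [mul_pow]; exact hb1⟩
  have hpos : 0 < ε ^ 2 * x ^ 4 / 2 := by positivity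
  refine le_of_mul_le_mul_right (h1.trans ?_) hpos
  rw [← hs2]
  have := mul_le_mul_of_nonneg_left hsx (show 0 ≤ 11/4 * s * x ^ 6 by positivity)
  nlinarith
end
end

section
/- Fix ε ∈ (0,1/2), m ∈ [−1+2ε, 1−2ε], and suppose Assumption 1 holds. Given λ* > 1, let ς* = E[h_1 g'(h_1 λ*)]. There exists N_ε > 0, independent of λ*, such that for every n > N_ε and every h ∈ L^ε_n, the set R_{n,λ*}(h) = { x ∈ ℝ : −A⁻_n(h) < x < (nς* ∧ Σ_n(h)) − A⁺_n(h) } is nonempty; in particular A⁺_n(h) − A⁻_n(h) < nς* ∧ Σ_n(h). -/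
open MeasureTheory Real Filter Set
open scoped ENNReal Topology BigOperators

noncomputable section

/-- Assumption 1 of the paper, phrased for the law `μ` of `h₁`. -/
structure Assumption1 (μ : Measure ℝ) : Prop where
  isProb : IsProbabilityMeasure μ
  acPart : ¬ μ.MutuallySingular (volume : Measure ℝ)
  smallBall : ∃ ε > (0:ℝ), ∃ p₁ > (0:ℝ), ∀ t ∈ Set.Ico (0:ℝ) ε,
    (μ {x : ℝ | |x| < t}).toReal ≤ p₁ * t
  densityLB : ∃ c d p₂ : ℝ, c < d ∧ 0 < p₂ ∧
    ∀ s : Set ℝ, s ⊆ Set.Icc c d → MeasurableSet s →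
      ENNReal.ofReal p₂ * volume s ≤ μ s
  intAbs : Integrable (fun x : ℝ => |x|) μ
  intSq : Integrable (fun x : ℝ => x ^ 2) μ
  intCube : Integrable (fun x : ℝ => |x| ^ 3) μ

/-- `ς* = E[h₁ g'(h₁ λ*)]`. -/
def sigmaStar (μ : Measure ℝ) (m lamStar : ℝ) : ℝ :=
  ∫ x, x * deriv (gfun m) (x * lamStar) ∂μ

lemma g_arg_pos {m : ℝ} (h1 : -1 < m) (h2 : m < 1) (y : ℝ) :
    0 < (1 + m) / 2 * Real.exp (y * (1 - m)) + (1 - m) / 2 * Real.exp (-(y * (1 + m))) := by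
  have a : 0 < (1 + m) / 2 := by linarith
  have b : 0 < (1 - m) / 2 := by linarith
  positivity

lemma g_nonneg {m : ℝ} (h1 : -1 < m) (h2 : m < 1) (y : ℝ) : 0 ≤ gfun m y := by
  unfold gfun
  apply Real.log_nonneg
  have a : 0 < (1 + m) / 2 := by linarith
  have b : 0 < (1 - m) / 2 := by linarith
  have e1 := Real.add_one_le_exp (y * (1 - m))
  have e2 := Real.add_one_le_exp (-(y * (1 + m)))
  have f1 := mul_le_mul_of_nonneg_left e1 a.le
  have f2 := mul_le_mul_of_nonneg_left e2 b.le
  nlinarith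

lemma g_lower {m : ℝ} (h1 : -1 < m) (h2 : m < 1) :
    ∃ K : ℝ, ∀ y, |y| - m * y - K ≤ gfun m y := by
  have a : 0 < (1 + m) / 2 := by linarith
  have b : 0 < (1 - m) / 2 := by linarith
  refine ⟨|Real.log ((1 + m) / 2)| + |Real.log ((1 - m) / 2)|, fun y => ?_⟩
  have k1 : Real.log ((1 + m) / 2) + y * (1 - m) ≤ gfun m y := by
    rw [← Real.log_exp (y * (1 - m)), ← Real.log_mul a.ne' (Real.exp_pos _).ne']
    unfold gfun
    apply Real.log_le_log (by positivity)
    have : 0 < (1 - m) / 2 * Real.exp (-(y * (1 + m))) := by positivity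
    linarith
  have k2 : Real.log ((1 - m) / 2) + -(y * (1 + m)) ≤ gfun m y := by
    rw [← Real.log_exp (-(y * (1 + m))), ← Real.log_mul b.ne' (Real.exp_pos _).ne']
    unfold gfun
    apply Real.log_le_log (by positivity)
    have : 0 < (1 + m) / 2 * Real.exp (y * (1 - m)) := by positivity
    linarith
  have n1 := neg_abs_le (Real.log ((1 + m) / 2))
  have n2 := neg_abs_le (Real.log ((1 - m) / 2))
  have n3 := abs_nonneg (Real.log ((1 + m) / 2))
  have n4 := abs_nonneg (Real.log ((1 - m) / 2))
  rcases abs_cases y with ⟨h, _⟩ | ⟨h, _⟩ <;> rw [h] <;> nlinarith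

def Dg (m y : ℝ) : ℝ := (1 - m) - 2 * (1 - m) / ((1 + m) * Real.exp (2 * y) + (1 - m))

lemma Dg_den {m : ℝ} (h1 : -1 < m) (h2 : m < 1) (y : ℝ) :
    0 < (1 + m) * Real.exp (2 * y) + (1 - m) := by
  have a : 0 < (1 + m) := by linarith
  have b : 0 < (1 - m) := by linarith
  positivity

lemma deriv_g {m : ℝ} (h1 : -1 < m) (h2 : m < 1) (y : ℝ) : deriv (gfun m) y = Dg m y := by
  have e1 : HasDerivAt (fun y : ℝ => Real.exp (y * (1 - m)))
      (Real.exp (y * (1 - m)) * (1 * (1 - m))) y := ((hasDerivAt_id y).mul_const (1 - m)).exp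
  have e2 : HasDerivAt (fun y : ℝ => Real.exp (-(y * (1 + m))))
      (Real.exp (-(y * (1 + m))) * (-(1 * (1 + m)))) y :=
    ((hasDerivAt_id y).mul_const (1 + m)).fun_neg.exp
  have e3 := ((e1.const_mul ((1 + m) / 2)).add (e2.const_mul ((1 - m) / 2))).log
    (g_arg_pos h1 h2 y).ne'
  have e4 : HasDerivAt (gfun m) _ y := e3
  rw [e4.deriv]
  have p := g_arg_pos h1 h2 y
  have d := Dg_den h1 h2 y
  unfold Dg
  have hx : Real.exp (y * (1 - m)) = Real.exp (2 * y) * Real.exp (-(y * (1 + m))) := by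
    rw [← Real.exp_add]; ring_nf
  simp only [Pi.add_apply]
  rw [hx] at p ⊢
  have q := Real.exp_pos (-(y * (1 + m)))
  generalize Real.exp (-(y * (1 + m))) = u at *
  generalize Real.exp (2 * y) = v at *
  rw [div_eq_iff p.ne']
  field_simp
  ring

lemma Dg_mono {m : ℝ} (h1 : -1 < m) (h2 : m < 1) : StrictMono (Dg m) := by
  intro x y hxy
  have a : 0 < (1 + m) := by linarith
  have b : 0 < (1 - m) := by linarith
  unfold Dg
  have hd := Dg_den h1 h2 x
  have : Real.exp (2 * x) < Real.exp (2 * y) := Real.exp_lt_exp.2 (by linarith)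
  gcongr

lemma Dg_zero {m : ℝ} : Dg m 0 = 0 := by
  unfold Dg
  norm_num

lemma Dg_bound {m : ℝ} (h1 : -1 < m) (h2 : m < 1) (y : ℝ) : |Dg m y| ≤ 2 := by
  have a : 0 < (1 + m) := by linarith
  have b : 0 < (1 - m) := by linarith
  have hd := Dg_den h1 h2 y
  have h3 : 0 < 2 * (1 - m) / ((1 + m) * Real.exp (2 * y) + (1 - m)) := by positivity
  have h4 : 2 * (1 - m) / ((1 + m) * Real.exp (2 * y) + (1 - m)) ≤ 2 := by
    rw [div_le_iff₀ hd]
    have : 0 < (1 + m) * Real.exp (2 * y) := by positivity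
    linarith
  unfold Dg
  rw [abs_le]
  constructor <;> linarith

lemma Dg_cont {m : ℝ} (h1 : -1 < m) (h2 : m < 1) : Continuous (Dg m) := by
  unfold Dg
  refine continuous_const.sub (Continuous.div (by fun_prop) (by fun_prop) ?_)
  intro y
  exact (Dg_den h1 h2 y).ne'

lemma xDg_le {m : ℝ} (h1 : -1 < m) (h2 : m < 1) {l l' : ℝ} (h : l ≤ l') (x : ℝ) :
    x * Dg m (x * l) ≤ x * Dg m (x * l') := by
  have hm := (Dg_mono h1 h2).monotone
  rcases le_total 0 x with hx | hx
  · exact mul_le_mul_of_nonneg_left (hm (mul_le_mul_of_nonneg_left h hx)) hx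
  · exact mul_le_mul_of_nonpos_left (hm (mul_le_mul_of_nonpos_left h hx)) hx

lemma xDg_int {m : ℝ} (h1 : -1 < m) (h2 : m < 1) {μ : Measure ℝ} (hAss : Assumption1 μ) (l : ℝ) :
    Integrable (fun x => x * Dg m (x * l)) μ := by
  refine Integrable.mono' (hAss.intAbs.const_mul 2) ?_ (ae_of_all _ fun x => ?_)
  · have := Dg_cont h1 h2
    exact Continuous.aestronglyMeasurable (by fun_prop)
  · rw [Real.norm_eq_abs, abs_mul, mul_comm]
    exact mul_le_mul_of_nonneg_right (Dg_bound h1 h2 _) (abs_nonneg _)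

lemma sigma_pos {m : ℝ} (h1 : -1 < m) (h2 : m < 1) {μ : Measure ℝ} (hAss : Assumption1 μ) :
    ∃ s > 0, ∀ l : ℝ, 1 < l → s ≤ sigmaStar μ m l := by
  refine ⟨∫ x, x * Dg m (x * 1) ∂μ, ?_, fun l hl => ?_⟩
  · have hne : ∀ x : ℝ, x ≠ 0 → 0 < x * Dg m (x * 1) := by
      intro x hx
      rw [mul_one]
      rcases lt_or_gt_of_ne hx with h | h
      · have := Dg_mono h1 h2 h
        rw [Dg_zero] at this
        exact mul_pos_of_neg_of_neg h this
      · have := Dg_mono h1 h2 h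
        rw [Dg_zero] at this
        exact mul_pos h this
    rw [gt_iff_lt, integral_pos_iff_support_of_nonneg _ (xDg_int h1 h2 hAss 1)]
    · obtain ⟨c, d, p, hcd, hp, H⟩ := hAss.densityLB
      have H1 := H (Set.Icc c d \ {0}) Set.sdiff_subset
        (measurableSet_Icc.diff (measurableSet_singleton 0))
      have hv : volume (Set.Icc c d \ {0}) = ENNReal.ofReal (d - c) := by
        rw [measure_sdiff_null (by simp), Real.volume_Icc]
      rw [hv] at H1
      have hpos : 0 < ENNReal.ofReal p * ENNReal.ofReal (d - c) :=
        ENNReal.mul_pos (by simpa using hp) (by simpa using hcd)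
      refine (hpos.trans_le H1).trans_le (measure_mono ?_)
      intro x hx
      exact (hne x hx.2).ne'
    · intro x
      by_cases hx : x = 0
      · simp [hx]
      · exact (hne x hx).le
  · unfold sigmaStar
    simp_rw [deriv_g h1 h2]
    exact integral_mono (xDg_int h1 h2 hAss 1) (xDg_int h1 h2 hAss l)
      fun x => xDg_le h1 h2 hl.le x

lemma Mn_nonneg {m : ℝ} (h1 : -1 < m) (h2 : m < 1) (n : ℕ) (hs : ℕ → ℝ) (l : ℝ) :
    0 ≤ Mn m n hs l := Finset.sum_nonneg fun _ _ => g_nonneg h1 h2 _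

lemma bdd {m : ℝ} (h1 : -1 < m) (h2 : m < 1) (n : ℕ) (hs : ℕ → ℝ) {a : ℝ}
    (ha : a ∈ Set.Ioo 0 (SigmaN m n hs)) :
    BddAbove (Set.range fun l : ℝ => l * a - Mn m n hs l) := by
  obtain ⟨K, hK⟩ := g_lower h1 h2
  refine ⟨max 0 (n * K), ?_⟩
  rintro _ ⟨l, rfl⟩
  simp only
  rcases le_total 0 l with hl | hl
  · apply le_max_of_le_right
    have : l * SigmaN m n hs - n * K ≤ Mn m n hs l := by
      have e : l * SigmaN m n hs - n * K =
          ∑ i ∈ Finset.range n, (|l * hs i| - m * (l * hs i) - K) := by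
        simp only [Finset.sum_sub_distrib, abs_mul, abs_of_nonneg hl, ← Finset.mul_sum,
          Finset.sum_const, Finset.card_range, nsmul_eq_mul, SigmaN]
        ring
      rw [e]
      exact Finset.sum_le_sum fun i _ => hK _
    have := mul_le_mul_of_nonneg_left ha.2.le hl
    linarith
  · apply le_max_of_le_left
    have := Mn_nonneg h1 h2 n hs l
    have := mul_nonpos_of_nonpos_of_nonneg hl ha.1.le
    linarith

lemma Mstar_slope {m : ℝ} (h1 : -1 < m) (h2 : m < 1) (n : ℕ) (hs : ℕ → ℝ) {a b : ℝ}
    (ha : 0 < a) (hab : a < b) (hb : b ∈ Set.Ioo 0 (SigmaN m n hs)) :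
    MstarN m n hs a * b ≤ a * MstarN m n hs b := by
  rw [← le_div_iff₀ hb.1]
  apply ciSup_le
  intro l
  rw [le_div_iff₀ hb.1]
  have k : l * b - Mn m n hs l ≤ MstarN m n hs b := le_ciSup (bdd h1 h2 n hs hb) l
  have k2 := mul_le_mul_of_nonneg_left k ha.le
  have k3 := mul_le_mul_of_nonneg_right hab.le (Mn_nonneg h1 h2 n hs l)
  nlinarith

lemma gamma_lower {m ε : ℝ} (hε : ε ∈ Set.Ioo (0 : ℝ) (1/2))
    (hm : m ∈ Set.Icc (-1 + 2*ε) (1 - 2*ε)) (n : ℕ) (hs : ℕ → ℝ) :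
    n * (-Real.log (1 - ε)) ≤ GammaN m n hs := by
  obtain ⟨e0, e1⟩ := hε
  obtain ⟨m0, m1⟩ := hm
  have key : ∀ i ∈ Finset.range n,
      Real.log (1 + Real.sign (hs i) * m) ≤ Real.log (1 - ε) + Real.log 2 := by
    intro i _
    rw [← Real.log_mul (by linarith) (by norm_num)]
    rcases Real.sign_apply_eq (hs i) with h | h | h <;> rw [h] <;>
      apply Real.log_le_log <;> linarith
  have := Finset.sum_le_sum key
  rw [Finset.sum_const, Finset.card_range, nsmul_eq_mul] at this
  unfold GammaN
  linarith

/-- the window `R_{n,λ*}(h)` is nonempty: there exists `N_ε > 0`,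
independent of `λ*`, such that for all `λ* > 1`, `n > N_ε`, `h ∈ L^ε_n`,
`C ∈ (εΓ_n(h),(1−ε)Γ_n(h))`, and `A_n(h,·)` the inverse of `M*_n(h,·)`, the set
`{x : −A⁻_n(h) < x < (nς* ∧ Σ_n(h)) − A⁺_n(h)}` is nonempty; in particular
`A⁺_n(h) − A⁻_n(h) < nς* ∧ Σ_n(h)`. -/
theorem stmt12 (μ : Measure ℝ) (hAss : Assumption1 μ) (ε m : ℝ)
    (hε : ε ∈ Set.Ioo (0 : ℝ) (1/2)) (hm : m ∈ Set.Icc (-1 + 2*ε) (1 - 2*ε)) :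
    ∃ N : ℝ, 0 < N ∧ ∀ lamStar : ℝ, 1 < lamStar → ∀ n : ℕ, N < n →
      ∀ hs ∈ Lset m ε n, ∀ C : ℝ,
        C ∈ Set.Ioo (ε * GammaN m n hs) ((1 - ε) * GammaN m n hs) →
        ∀ A : ℝ → ℝ,
          (∀ c ∈ Set.Ioo 0 (GammaN m n hs),
            A c ∈ Set.Ioo 0 (SigmaN m n hs) ∧ MstarN m n hs (A c) = c) →
          Set.Nonempty {x : ℝ | -A (C - 3/4 * Real.log n) < x ∧
              x < min ((n : ℝ) * sigmaStar μ m lamStar) (SigmaN m n hs) -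
                A (C + 2 * Real.log n)} ∧
          A (C + 2 * Real.log n) - A (C - 3/4 * Real.log n) <
            min ((n : ℝ) * sigmaStar μ m lamStar) (SigmaN m n hs) := by
  have h1 : -1 < m := by linarith [hm.1, hε.1]
  have h2 : m < 1 := by linarith [hm.2, hε.1]
  obtain ⟨s, hs0, hsig⟩ := sigma_pos h1 h2 hAss
  have hc : 0 < -Real.log (1 - ε) := by
    have := Real.log_neg (x := 1 - ε) (by linarith [hε.2]) (by linarith [hε.1])
    linarith
  set c := -Real.log (1 - ε) with hcdef
  set κ := ε * c with hκdef
  have hκ : 0 < κ := mul_pos hε.1 hc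
  set δ := min (κ / 4) (κ * s / 4) with hδdef
  have hδ : 0 < δ := lt_min (by positivity) (by positivity)
  have hδ1 : δ ≤ κ / 4 := min_le_left _ _
  have hδ2 : δ ≤ κ * s / 4 := min_le_right _ _
  have ev : ∀ᶠ x : ℝ in atTop, Real.log x ≤ δ * Real.sqrt x := by
    have := (isLittleO_log_rpow_atTop (r := 1/2) (by norm_num)).bound hδ
    filter_upwards [this, eventually_ge_atTop 1] with x hx hx1
    rw [Real.sqrt_eq_rpow]
    rw [Real.norm_eq_abs, Real.norm_eq_abs, abs_of_nonneg (Real.log_nonneg hx1),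
      abs_of_nonneg (by positivity)] at hx
    exact hx
  obtain ⟨N0, hN0⟩ := eventually_atTop.1 ev
  refine ⟨max N0 1, by positivity, ?_⟩
  intro l hl n hn hs hhs C hC A hA
  have hnN : N0 ≤ (n:ℝ) := (le_max_left _ _).trans hn.le
  have hn1 : 1 < (n:ℝ) := (le_max_right _ _).trans_lt hn
  have hlog := hN0 _ hnN
  have hlogpos : 0 < Real.log n := Real.log_pos hn1
  have hq2 : Real.sqrt n * Real.sqrt n = n := Real.mul_self_sqrt (by linarith)
  have hq1 : 1 < Real.sqrt n := by
    rw [Real.lt_sqrt (by norm_num)]; linarith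
  have hSig : SigmaN m n hs < n * Real.sqrt n := by
    have e : (n:ℝ) ^ ((3:ℝ)/2) = n * Real.sqrt n := by
      rw [Real.sqrt_eq_rpow, ← Real.rpow_one_add' (by linarith) (by norm_num)]
      norm_num
    rw [← e]
    exact hhs.2.2.2
  have hΓ := gamma_lower hε hm n hs
  rw [← hcdef] at hΓ
  have hΓ' : κ * n ≤ ε * GammaN m n hs := by
    have := mul_le_mul_of_nonneg_left hΓ hε.1.le
    rw [hκdef]; linarith
  generalize GammaN m n hs = G at *
  generalize Real.sqrt n = q at *
  generalize Real.log n = L at *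
  have hS0 : 0 < SigmaN m n hs := (by positivity : (0:ℝ) ≤ (n:ℝ) ^ ((4:ℝ)/5)).trans_lt hhs.2.2.1
  have hqn : q ≤ n := by nlinarith
  have hδq : δ * q ≤ κ / 4 * n := mul_le_mul hδ1 hqn (by linarith) (by positivity)
  have hκn : 0 < κ * n := by positivity
  have hC1 := hC.1
  have hC2 := hC.2
  have hCm : κ * n * (13/16) < C - 3/4 * L := by linarith
  have hCm0 : 0 < C - 3/4 * L := by linarith
  have hCp : C + 2 * L < G := by linarith
  obtain ⟨am, am'⟩ := hA (C - 3/4 * L) ⟨hCm0, by linarith⟩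
  obtain ⟨ap, ap'⟩ := hA (C + 2 * L) ⟨by linarith, hCp⟩
  have hsl := hsig l hl
  have main : A (C + 2 * L) - A (C - 3/4 * L) <
      min ((n : ℝ) * sigmaStar μ m l) (SigmaN m n hs) := by
    have hns : (n:ℝ) * s ≤ n * sigmaStar μ m l := by gcongr
    suffices A (C + 2 * L) - A (C - 3/4 * L) < min (n * s) (SigmaN m n hs) from
      this.trans_le (min_le_min_right _ hns)
    have hns0 : 0 < (n:ℝ) * s := by positivity
    by_cases hle : A (C + 2 * L) ≤ A (C - 3/4 * L)
    · have : 0 < min (n * s) (SigmaN m n hs) := lt_min hns0 hS0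
      linarith
    push Not at hle
    have sl := Mstar_slope h1 h2 n hs am.1 hle ap
    rw [am', ap'] at sl
    have amS := am.2
    have am0 := am.1
    generalize A (C + 2 * L) = y at *
    generalize A (C - 3/4 * L) = x at *
    generalize SigmaN m n hs = S at *
    have k1 : (y - x) * (κ * n * (13/16)) < (y - x) * (C - 3/4 * L) :=
      mul_lt_mul_of_pos_left hCm (by linarith)
    have k2 : (y - x) * (C - 3/4 * L) ≤ 11/4 * (L * x) := by nlinarith
    have k3 : L * x ≤ δ * q * S := mul_le_mul hlog amS.le am0.le (by positivity)
    have k4 : 0 < δ * q * S := by positivity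
    have k5 : (y - x) * (κ * n) < 4 * (δ * q * S) := by linarith
    refine lt_min ?_ ?_
    · have j1 : δ * q * S ≤ δ * q * (n * q) := by gcongr
      have j2 : δ * q * (n * q) = δ * (n * n) := by rw [← hq2]; ring
      have j3 : δ * (n * n) ≤ κ * s / 4 * (n * n) := by gcongr
      refine lt_of_mul_lt_mul_right (a := κ * n) ?_ hκn.le
      calc _ < 4 * (δ * q * S) := k5
        _ ≤ 4 * (κ * s / 4 * (n * n)) := by linarith
        _ = _ := by ring
    · have j1 : δ * q * S ≤ κ / 4 * n * S := by gcongr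
      refine lt_of_mul_lt_mul_right (a := κ * n) ?_ hκn.le
      linarith
  refine ⟨?_, main⟩
  obtain ⟨z, hz1, hz2⟩ := exists_between (show -A (C - 3/4 * L) <
    min ((n : ℝ) * sigmaStar μ m l) (SigmaN m n hs) - A (C + 2 * L) by linarith)
  exact ⟨z, hz1, hz2⟩
end
end

section
/- Fix ε ∈ (0,1/2), m ∈ [−1+2ε, 1−2ε], and λ* > 1. There exists N_ε > 0 such that for every n > N_ε, every h ∈ L^ε_n, every C ∈ (εΓ_n(h), (1−ε)Γ_n(h)), and every x ∈ R_{n,λ*}(h), the system of equations { M*_n(h, Ã) + (1/2)log(2π M''_n(h, Λ̃)) = C with Ã ∈ (0, Σ_n(h)); M'_n(h, Λ̃) = Ã; M'_n(h, Λ̃ˣ) = Ã + x } admits a solution (Ã_n(h), Λ̃_n(h), Λ̃ˣ_n(h)) (with Ã_n measurable in h) satisfying Ã_n(h) ∈ [A⁻_n(h), A⁺_n(h)], Λ̃_n(h) ∈ [Λ_n(h,A⁻_n(h)), Λ_n(h,A⁺_n(h))], and Λ̃ˣ_n(h) ∈ [Λ_n(h,A⁻_n(h)+x), Λ_n(h,A⁺_n(h)+x)].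 -/
open MeasureTheory Real Filter Set
open scoped ENNReal Topology BigOperators

noncomputable section

def ea (m y : ℝ) : ℝ := (1 + m) / 2 * Real.exp (y * (1 - m))
def eb (m y : ℝ) : ℝ := (1 - m) / 2 * Real.exp (-(y * (1 + m)))
def g1 (m y : ℝ) : ℝ := ((1 - m) * ea m y - (1 + m) * eb m y) / (ea m y + eb m y)
def g2 (m y : ℝ) : ℝ := 4 * (ea m y * eb m y) / (ea m y + eb m y) ^ 2
def M1 (m : ℝ) (n : ℕ) (hs : ℕ → ℝ) (lam : ℝ) : ℝ :=
  ∑ i ∈ Finset.range n, hs i * g1 m (lam * hs i)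
def M2 (m : ℝ) (n : ℕ) (hs : ℕ → ℝ) (lam : ℝ) : ℝ :=
  ∑ i ∈ Finset.range n, hs i ^ 2 * g2 m (lam * hs i)
def phiN (m : ℝ) (n : ℕ) (hs : ℕ → ℝ) (lam : ℝ) : ℝ := lam * M1 m n hs lam - Mn m n hs lam
def FN (m : ℝ) (n : ℕ) (hs : ℕ → ℝ) (lam : ℝ) : ℝ :=
  phiN m n hs lam + 1/2 * Real.log (2 * π * M2 m n hs lam)
open Classical in
def TN (m : ℝ) (n : ℕ) (C : ℝ) (hs : ℕ → ℝ) : ℝ :=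
  (⨅ q : ℚ, if 0 < (q:ℝ) ∧ C < FN m n hs q then ENNReal.ofReal q else ⊤).toReal

lemma ea_pos {m : ℝ} (h : -1 < m) (y : ℝ) : 0 < ea m y := by
  unfold ea; have : 0 < 1 + m := by linarith
  positivity
lemma eb_pos {m : ℝ} (h : m < 1) (y : ℝ) : 0 < eb m y := by
  unfold eb; have : 0 < 1 - m := by linarith
  positivity

lemma hasDerivAt_ea (m y : ℝ) : HasDerivAt (ea m) ((1 - m) * ea m y) y := by
  unfold ea
  have := (((hasDerivAt_id y).mul_const (1 - m)).exp).const_mul ((1 + m) / 2)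
  refine HasDerivAt.congr_deriv this ?_
  simp only [id]; ring
lemma hasDerivAt_eb (m y : ℝ) : HasDerivAt (eb m) (-(1 + m) * eb m y) y := by
  unfold eb
  have := (((hasDerivAt_id y).mul_const (1 + m)).neg.exp).const_mul ((1 - m) / 2)
  refine HasDerivAt.congr_deriv this ?_
  simp only [id, Pi.neg_apply]; ring

lemma hasDerivAt_g {m : ℝ} (h1 : -1 < m) (h2 : m < 1) (y : ℝ) :
    HasDerivAt (gfun m) (g1 m y) y := by
  have ha := ea_pos h1 y
  have hb := eb_pos h2 y
  have := ((hasDerivAt_ea m y).add (hasDerivAt_eb m y)).log (by simp; positivity)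
  refine HasDerivAt.congr_deriv this ?_
  simp only [g1, Pi.add_apply]; ring

lemma hasDerivAt_g1 {m : ℝ} (h1 : -1 < m) (h2 : m < 1) (y : ℝ) :
    HasDerivAt (g1 m) (g2 m y) y := by
  have ha := ea_pos h1 y
  have hb := eb_pos h2 y
  have := (((hasDerivAt_ea m y).const_mul (1 - m)).sub ((hasDerivAt_eb m y).const_mul (1 + m))).div
    ((hasDerivAt_ea m y).add (hasDerivAt_eb m y)) (by simp; positivity)
  refine HasDerivAt.congr_deriv this ?_
  simp only [g2, Pi.add_apply, Pi.sub_apply]; ring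

lemma g2_pos {m : ℝ} (h1 : -1 < m) (h2 : m < 1) (y : ℝ) : 0 < g2 m y := by
  have ha := ea_pos h1 y
  have hb := eb_pos h2 y
  unfold g2; positivity
lemma g2_le {m : ℝ} (h1 : -1 < m) (h2 : m < 1) (y : ℝ) : g2 m y ≤ 1 := by
  have ha := ea_pos h1 y
  have hb := eb_pos h2 y
  unfold g2
  rw [div_le_one (by positivity)]
  nlinarith [sq_nonneg (ea m y - eb m y)]

lemma hasDerivAt_Mn {m : ℝ} (h1 : -1 < m) (h2 : m < 1) (n : ℕ) (hs : ℕ → ℝ) (x : ℝ) :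
    HasDerivAt (Mn m n hs) (M1 m n hs x) x := by
  unfold M1
  have : Mn m n hs = fun l => ∑ i ∈ Finset.range n, gfun m (l * hs i) := rfl
  rw [this]
  refine HasDerivAt.fun_sum fun i _ => ?_
  have := (hasDerivAt_g h1 h2 (x * hs i)).comp x ((hasDerivAt_id x).mul_const (hs i))
  refine HasDerivAt.congr_deriv this ?_
  ring
lemma hasDerivAt_M1 {m : ℝ} (h1 : -1 < m) (h2 : m < 1) (n : ℕ) (hs : ℕ → ℝ) (x : ℝ) :
    HasDerivAt (M1 m n hs) (M2 m n hs x) x := by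
  unfold M2
  have : M1 m n hs = fun l => ∑ i ∈ Finset.range n, hs i * g1 m (l * hs i) := rfl
  rw [this]
  refine HasDerivAt.fun_sum fun i _ => ?_
  have := ((hasDerivAt_g1 h1 h2 (x * hs i)).comp x
    ((hasDerivAt_id x).mul_const (hs i))).const_mul (hs i)
  refine HasDerivAt.congr_deriv this ?_
  ring

lemma deriv_Mn {m : ℝ} (h1 : -1 < m) (h2 : m < 1) (n : ℕ) (hs : ℕ → ℝ) :
    deriv (Mn m n hs) = M1 m n hs := funext fun x => (hasDerivAt_Mn h1 h2 n hs x).deriv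
lemma deriv_M1 {m : ℝ} (h1 : -1 < m) (h2 : m < 1) (n : ℕ) (hs : ℕ → ℝ) :
    deriv (M1 m n hs) = M2 m n hs := funext fun x => (hasDerivAt_M1 h1 h2 n hs x).deriv

lemma tangent_le (f f' : ℝ → ℝ) (hf : ∀ x, HasDerivAt f (f' x) x) (hmono : Monotone f')
    (a b : ℝ) : f a + f' a * (b - a) ≤ f b := by
  rcases lt_trichotomy a b with h | h | h
  · obtain ⟨c, hc, he⟩ := exists_hasDerivAt_eq_slope f f' h
      (fun x _ => (hf x).continuousAt.continuousWithinAt) (fun x _ => hf x)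
    have hp : 0 < b - a := by linarith
    rw [eq_div_iff hp.ne'] at he
    nlinarith [hmono hc.1.le]
  · subst h; simp
  · obtain ⟨c, hc, he⟩ := exists_hasDerivAt_eq_slope f f' h
      (fun x _ => (hf x).continuousAt.continuousWithinAt) (fun x _ => hf x)
    have hp : 0 < a - b := by linarith
    rw [eq_div_iff hp.ne'] at he
    nlinarith [hmono hc.2.le]

lemma Mstar_eq {m : ℝ} (h1 : -1 < m) (h2 : m < 1) (n : ℕ) (hs : ℕ → ℝ)
    (hmono : Monotone (M1 m n hs)) (l : ℝ) :
    MstarN m n hs (M1 m n hs l) = phiN m n hs l := by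
  have ht := tangent_le _ _ (hasDerivAt_Mn h1 h2 n hs) hmono l
  have hub : ∀ x, x * M1 m n hs l - Mn m n hs x ≤ phiN m n hs l := fun x => by
    unfold phiN; linarith [ht x]
  unfold MstarN
  apply le_antisymm
  · exact ciSup_le hub
  · exact le_ciSup (f := fun x => x * M1 m n hs l - Mn m n hs x)
      ⟨_, by rintro _ ⟨x, rfl⟩; exact hub x⟩ l

lemma phi_lt {m : ℝ} (h1 : -1 < m) (h2 : m < 1) (n : ℕ) (hs : ℕ → ℝ)
    (hmono : StrictMono (M1 m n hs)) {a b : ℝ} (ha : 0 < a) (hab : a < b) :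
    phiN m n hs a < phiN m n hs b := by
  have ht := tangent_le _ _ (hasDerivAt_Mn h1 h2 n hs) hmono.monotone b a
  unfold phiN
  nlinarith [hmono hab]

/- the entropy estimate, positive field -/
lemma key_pos {ε m : ℝ} (hε : 0 < ε) (h1 : -1 + 2 * ε ≤ m) (h2 : m ≤ 1 - 2 * ε) {y : ℝ}
    (hy : 0 ≤ y) :
    -Real.log ((1 + m) / 2) - (y * g1 m y - gfun m y) ≤ ε ^ 2 / 4 + 4 / ε ^ 4 * g2 m y := by
  have ha := ea_pos (show -1 < m by linarith) y
  have hb := eb_pos (show m < 1 by linarith) y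
  have hg : gfun m y = Real.log (ea m y + eb m y) := rfl
  have hla : Real.log (ea m y) = Real.log ((1 + m) / 2) + y * (1 - m) := by
    unfold ea
    rw [Real.log_mul (by linarith) (Real.exp_pos _).ne', Real.log_exp]
  set a := ea m y with hadef
  set b := eb m y with hbdef
  set u := Real.sqrt (b / a) with hu
  have hu0 : 0 < u := Real.sqrt_pos.2 (by positivity)
  have husq : u ^ 2 = b / a := Real.sq_sqrt (by positivity)
  have hbu : b = a * u ^ 2 := by rw [husq]; field_simp
  have hp : ε ≤ (1 + m) / 2 := by linarith
  -- u ^ 2 * exp (2 y) = q / p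
  have hq : u ^ 2 * Real.exp y ^ 2 * ((1 + m) / 2) = (1 - m) / 2 := by
    have e1 : Real.exp y ^ 2 = Real.exp (y * (1 - m)) * Real.exp (y * (1 + m)) := by
      rw [← Real.exp_add, ← Real.exp_nat_mul]; congr 1; push_cast; ring
    rw [husq, hadef, hbdef, e1]
    unfold ea eb
    rw [Real.exp_neg]
    have : (1 + m) ≠ 0 := by linarith
    field_simp
  have hexp : 1 ≤ Real.exp y := Real.one_le_exp hy
  have hyexp : 2 * y ≤ Real.exp y := by
    have := Real.quadratic_le_exp_of_nonneg hy
    nlinarith [sq_nonneg (y - 1)]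
  have hue : (u * Real.exp y) ≤ 1 / ε := by
    rw [le_div_iff₀ hε]
    have hx : (u * Real.exp y) ^ 2 * ε ≤ 1 := by
      have : (u * Real.exp y) ^ 2 * ε ≤ (u * Real.exp y) ^ 2 * ((1 + m) / 2) := by gcongr
      nlinarith
    have hz : 0 < u * Real.exp y := by positivity
    nlinarith
  have huy : u * y ≤ 1 / (2 * ε) := by
    have : u * (2 * y) ≤ u * Real.exp y := by gcongr
    have e : 1 / (2 * ε) = (1 / ε) / 2 := by field_simp
    rw [e]; linarith
  have h1u : 1 + u ^ 2 ≤ 1 / ε := by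
    rw [le_div_iff₀ hε]
    have : (1 : ℝ) ≤ Real.exp y ^ 2 := one_le_pow₀ hexp
    have h3 : u ^ 2 * ((1 + m) / 2) ≤ (1 - m) / 2 := by
      have hpp : 0 ≤ u ^ 2 * ((1 + m) / 2) := by
        have : 0 ≤ (1 + m) / 2 := by linarith
        positivity
      nlinarith
    nlinarith [sq_nonneg u]
  set w := 2 * u / (1 + u ^ 2) with hw
  have hw0 : 0 < w := by positivity
  have hg2 : g2 m y = w ^ 2 := by
    unfold g2; rw [← hadef, ← hbdef, hw, hbu]
    field_simp; ring
  have hlog : Real.log (a + b) = Real.log a + Real.log (1 + u ^ 2) := by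
    rw [hbu, ← Real.log_mul ha.ne' (by positivity)]; ring_nf
  have hlog2 : Real.log (1 + u ^ 2) ≤ 2 * u := by
    rw [Real.log_le_iff_le_exp (by positivity)]
    have := Real.add_one_le_exp u
    have e : Real.exp (2 * u) = Real.exp u ^ 2 := by
      rw [← Real.exp_nat_mul]; simp
    rw [e]; nlinarith
  have hg1 : g1 m y = (1 - m) - w * u := by
    unfold g1; rw [← hadef, ← hbdef, hw, hbu]
    field_simp; ring
  have hwu : 2 * u ≤ w * (1 / ε) := by
    have : w * (1 + u ^ 2) = 2 * u := by rw [hw]; field_simp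
    rw [← this]; gcongr
  have hmain : -Real.log ((1 + m) / 2) - (y * g1 m y - gfun m y) ≤ w * (2 / ε) := by
    rw [hg, hg1, hlog, hla]
    have h5 : w * (u * y) ≤ w * (1 / (2 * ε)) := by gcongr
    have h6 : w * (1 / (2 * ε)) ≤ w * (1 / ε) := by
      gcongr; linarith
    have e : w * (2 / ε) = w * (1 / ε) + w * (1 / ε) := by ring
    rw [e]; nlinarith
  refine hmain.trans ?_
  rw [hg2]
  have h7 : 0 ≤ (ε / 2 - 2 / ε ^ 2 * w) ^ 2 := sq_nonneg _
  have e : (ε / 2 - 2 / ε ^ 2 * w) ^ 2 = ε ^ 2 / 4 + 4 / ε ^ 4 * w ^ 2 - w * (2 / ε) := by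
    field_simp; ring
  linarith

lemma key_neg {ε m : ℝ} (hε : 0 < ε) (h1 : -1 + 2 * ε ≤ m) (h2 : m ≤ 1 - 2 * ε) {y : ℝ}
    (hy : y ≤ 0) :
    -Real.log ((1 - m) / 2) - (y * g1 m y - gfun m y) ≤ ε ^ 2 / 4 + 4 / ε ^ 4 * g2 m y := by
  have h := key_pos hε (m := -m) (by linarith) (by linarith) (y := -y) (by linarith)
  have ea' : ea (-m) (-y) = eb m y := by unfold ea eb; ring_nf
  have eb' : eb (-m) (-y) = ea m y := by unfold ea eb; ring_nf
  have e1 : g1 (-m) (-y) = - g1 m y := by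
    unfold g1; rw [ea', eb', ← neg_div]; congr 1 <;> ring
  have e2 : g2 (-m) (-y) = g2 m y := by
    unfold g2; rw [ea', eb']; congr 1 <;> ring
  have e0 : gfun (-m) (-y) = gfun m y := by
    change Real.log (ea (-m) (-y) + eb (-m) (-y)) = Real.log (ea m y + eb m y)
    rw [ea', eb', add_comm]
  rw [e1, e2, e0] at h
  have : (1 + -m) / 2 = (1 - m) / 2 := by ring
  rw [this] at h
  linarith

lemma Gamma_eq (m : ℝ) (n : ℕ) (hs : ℕ → ℝ) :
    GammaN m n hs = ∑ i ∈ Finset.range n, (Real.log 2 - Real.log (1 + Real.sign (hs i) * m)) := by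
  unfold GammaN; rw [Finset.sum_sub_distrib]; simp; ring

lemma gam_ge {ε m : ℝ} (hε : 0 < ε) (h1 : -1 + 2 * ε ≤ m) (h2 : m ≤ 1 - 2 * ε)
    {h : ℝ} (hh : h ≠ 0) : ε ≤ Real.log 2 - Real.log (1 + Real.sign h * m) := by
  have aux : ∀ t : ℝ, 0 < t → t ≤ 2 - 2 * ε → ε ≤ Real.log 2 - Real.log t := by
    intro t ht ht2
    have := Real.log_le_sub_one_of_pos (show 0 < t / 2 by positivity)
    rw [Real.log_div ht.ne' (by norm_num)] at this
    linarith
  rcases lt_or_gt_of_ne hh with h' | h'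
  · rw [Real.sign_of_neg h']; apply aux <;> linarith
  · rw [Real.sign_of_pos h']; apply aux <;> linarith

lemma Gamma_ge {ε m : ℝ} (hε : 0 < ε) (h1 : -1 + 2 * ε ≤ m) (h2 : m ≤ 1 - 2 * ε)
    (n : ℕ) {hs : ℕ → ℝ} (hh : ∀ i < n, hs i ≠ 0) : n * ε ≤ GammaN m n hs := by
  rw [Gamma_eq]
  have := Finset.card_nsmul_le_sum (Finset.range n)
    (fun i => Real.log 2 - Real.log (1 + Real.sign (hs i) * m)) ε
    (fun i hi => gam_ge hε h1 h2 (hh i (Finset.mem_range.1 hi)))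
  simpa using this

lemma Gamma_sub_le {ε m : ℝ} (hε : 0 < ε) (h1 : -1 + 2 * ε ≤ m) (h2 : m ≤ 1 - 2 * ε)
    (n : ℕ) {hs : ℕ → ℝ} (hh : ∀ i < n, hs i ≠ 0) {l : ℝ} (hl : 0 ≤ l) :
    GammaN m n hs - phiN m n hs l ≤
      n * (ε ^ 2 / 4) + 4 / ε ^ 4 * ∑ i ∈ Finset.range n, g2 m (l * hs i) := by
  have e : GammaN m n hs - phiN m n hs l = ∑ i ∈ Finset.range n,
      (Real.log 2 - Real.log (1 + Real.sign (hs i) * m)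
        - ((l * hs i) * g1 m (l * hs i) - gfun m (l * hs i))) := by
    rw [Gamma_eq, Finset.sum_sub_distrib (f := fun i => Real.log 2 - Real.log (1 + Real.sign (hs i) * m)),
      Finset.sum_sub_distrib (f := fun i => (l * hs i) * g1 m (l * hs i))]
    unfold phiN M1 Mn
    rw [Finset.mul_sum]
    simp only [mul_assoc]
  have e2 : n * (ε ^ 2 / 4) + 4 / ε ^ 4 * ∑ i ∈ Finset.range n, g2 m (l * hs i)
      = ∑ i ∈ Finset.range n, (ε ^ 2 / 4 + 4 / ε ^ 4 * g2 m (l * hs i)) := by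
    rw [Finset.sum_add_distrib, Finset.mul_sum]; simp
  rw [e, e2]
  refine Finset.sum_le_sum fun i hi => ?_
  rcases lt_or_gt_of_ne (hh i (Finset.mem_range.1 hi)) with h' | h'
  · have := key_neg hε h1 h2 (y := l * hs i) (by nlinarith)
    rw [Real.log_div (by linarith) (by norm_num)] at this
    rw [Real.sign_of_neg h']
    have e3 : 1 + -1 * m = 1 - m := by ring
    rw [e3]; linarith
  · have := key_pos hε h1 h2 (y := l * hs i) (by positivity)
    rw [Real.log_div (by linarith) (by norm_num)] at this
    rw [Real.sign_of_pos h', one_mul]; linarith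

lemma cont_ea (m : ℝ) : Continuous (ea m) := by unfold ea; fun_prop
lemma cont_eb (m : ℝ) : Continuous (eb m) := by unfold eb; fun_prop
lemma meas_g (m : ℝ) : Measurable (gfun m) := by unfold gfun; fun_prop
lemma meas_g1 (m : ℝ) : Measurable (g1 m) := by
  unfold g1
  have := (cont_ea m).measurable
  have := (cont_eb m).measurable
  fun_prop
lemma meas_g2 (m : ℝ) : Measurable (g2 m) := by
  unfold g2
  have := (cont_ea m).measurable
  have := (cont_eb m).measurable
  fun_prop
lemma meas_FN (m : ℝ) (n : ℕ) (l : ℝ) : Measurable (fun hs => FN m n hs l) := by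
  unfold FN phiN M1 M2 Mn
  have := meas_g m
  have := meas_g1 m
  have := meas_g2 m
  fun_prop
lemma meas_TN (m : ℝ) (n : ℕ) (C : ℝ) : Measurable (TN m n C) := by
  classical
  unfold TN
  apply Measurable.ennreal_toReal
  refine Measurable.iInf fun q => ?_
  refine Measurable.ite ?_ measurable_const measurable_const
  exact (MeasurableSet.const _).inter (measurableSet_lt measurable_const (meas_FN m n q))
lemma meas_Atil (m : ℝ) (n : ℕ) (C : ℝ) : Measurable (fun hs => M1 m n hs (TN m n C hs)) := by
  unfold M1
  have := meas_g1 m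
  have := meas_TN m n C
  fun_prop

/- first crossing -/
lemma TN_spec {m : ℝ} {n : ℕ} {C : ℝ} {hs : ℕ → ℝ} (hF : Continuous (FN m n hs))
    (h0 : FN m n hs 0 < C) {l : ℝ} (hl : 0 < l) (hFl : C < FN m n hs l) :
    0 < TN m n C hs ∧ TN m n C hs ≤ l ∧ FN m n hs (TN m n C hs) = C := by
  classical
  set I := (⨅ q : ℚ, if 0 < (q:ℝ) ∧ C < FN m n hs q then ENNReal.ofReal q else ⊤) with hI
  have hT : TN m n C hs = I.toReal := by
    unfold TN; rw [hI]; 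
  have hopen : IsOpen {t | C < FN m n hs t} := isOpen_lt continuous_const hF
  have hq : ∀ q : ℚ, 0 < (q:ℝ) → C < FN m n hs q → I ≤ ENNReal.ofReal q := by
    intro q h1 h2
    have := iInf_le (fun q : ℚ => if 0 < (q:ℝ) ∧ C < FN m n hs q then ENNReal.ofReal q else ⊤) q
    rw [hI]; refine this.trans (le_of_eq ?_)
    exact if_pos ⟨h1, h2⟩
  -- rationals just to the right
  have hright : ∀ t, 0 < t → C < FN m n hs t → ∀ s, t < s → I ≤ ENNReal.ofReal s := by
    intro t ht hFt s hts
    obtain ⟨d, hd, hsub⟩ := Metric.isOpen_iff.1 hopen t hFt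
    obtain ⟨q, hq1, hq2⟩ := exists_rat_btwn (lt_min hts (lt_add_of_pos_right t hd))
    refine (hq q (ht.trans hq1) (hsub ?_)).trans
      (ENNReal.ofReal_le_ofReal (hq2.le.trans (min_le_left _ _)))
    have := hq2.trans_le (min_le_right _ _)
    rw [Metric.mem_ball, Real.dist_eq, abs_lt]; constructor <;> linarith
  have htop : I ≠ ⊤ := ne_top_of_le_ne_top ENNReal.ofReal_ne_top (hright l hl hFl (l+1) (by linarith))
  have hTle : ∀ t, 0 < t → C < FN m n hs t → TN m n C hs ≤ t := by
    intro t ht hFt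
    refine le_of_forall_gt_imp_ge_of_dense fun s hs' => ?_
    rw [hT]
    exact ENNReal.toReal_le_of_le_ofReal (by linarith) (hright t ht hFt s hs')
  have hT0 : 0 ≤ TN m n C hs := by rw [hT]; exact ENNReal.toReal_nonneg
  have happ : ∀ s, TN m n C hs < s → ∃ t, TN m n C hs ≤ t ∧ t < s ∧ C < FN m n hs t := by
    intro s hs'
    have : I < ENNReal.ofReal s := by
      rw [hT] at hs'
      exact (ENNReal.lt_ofReal_iff_toReal_lt htop).2 hs'
    rw [hI, iInf_lt_iff] at this
    obtain ⟨q, hq'⟩ := this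
    split_ifs at hq' with hc
    · refine ⟨q, hTle q hc.1 hc.2, ?_, hc.2⟩
      exact (ENNReal.ofReal_lt_ofReal_iff (hT0.trans_lt hs')).1 hq'
    · simp at hq'
  have hge : C ≤ FN m n hs (TN m n C hs) := by
    by_contra! hlt
    obtain ⟨d, hd, hsub⟩ := Metric.isOpen_iff.1 (isOpen_lt hF continuous_const : IsOpen {t | FN m n hs t < C}) _ hlt
    obtain ⟨t, h1, h2, h3⟩ := happ (TN m n C hs + d) (by linarith)
    have : FN m n hs t < C := hsub (by
      rw [Metric.mem_ball, Real.dist_eq, abs_lt]; constructor <;> linarith)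
    linarith
  have hTpos : 0 < TN m n C hs := by
    rcases hT0.lt_or_eq with h | h
    · exact h
    · rw [← h] at hge; linarith
  refine ⟨hTpos, hTle l hl hFl, le_antisymm ?_ hge⟩
  by_contra! hlt
  obtain ⟨d, hd, hsub⟩ := Metric.isOpen_iff.1 hopen _ hlt
  obtain ⟨t, ht1, ht2⟩ := exists_between (max_lt hTpos (sub_lt_self (TN m n C hs) hd))
  have h1 := (le_max_left _ _).trans_lt ht1
  have h2 := (le_max_right _ _).trans_lt ht1
  have : C < FN m n hs t := hsub (by
      rw [Metric.mem_ball, Real.dist_eq, abs_lt]; constructor <;> linarith)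
  linarith [hTle t h1 this]

lemma exists_N {ε : ℝ} (hε : 0 < ε) : ∃ N : ℝ, 1 < N ∧ ∀ x : ℝ, N < x →
    2 * Real.log x ≤ x * ε ^ 2 / 2 := by
  have h := Real.isLittleO_log_id_atTop.bound (show 0 < ε ^ 2 / 4 by positivity)
  obtain ⟨N, hN⟩ := eventually_atTop.1 h
  refine ⟨max N 2, by simp, fun x hx => ?_⟩
  have h1 := (le_max_left _ _).trans_lt hx
  have h2 := (le_max_right _ _).trans_lt hx
  have := hN x h1.le
  simp only [id, Real.norm_eq_abs] at this
  rw [abs_of_pos (by linarith : (0:ℝ) < x)] at this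
  linarith [le_abs_self (Real.log x)]

/-- existence of a (measurable in `h`) solution `(Ã_n, Λ̃_n, Λ̃ˣ_n)` of the
system `M*_n(h,Ã) + ½ log(2π M''_n(h,Λ̃)) = C`, `M'_n(h,Λ̃) = Ã`, `M'_n(h,Λ̃ˣ) = Ã + x`,
with the stated localization bounds, for all `x ∈ R_{n,λ*}(h)`. Here `A` is the inverse
of `M*_n(h,·)` and `Lam` the inverse of `M'_n(h,·)`. -/
theorem stmt13 (μ : Measure ℝ) (hAss : Assumption1 μ) (ε m : ℝ)
    (hε : ε ∈ Set.Ioo (0 : ℝ) (1/2)) (hm : m ∈ Set.Icc (-1 + 2*ε) (1 - 2*ε)) :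
    ∃ N : ℝ, 0 < N ∧ ∀ lamStar : ℝ, 1 < lamStar → ∀ n : ℕ, N < n → ∀ C : ℝ,
      ∃ Atil : (ℕ → ℝ) → ℝ, Measurable Atil ∧
        ∀ hs ∈ Lset m ε n,
          C ∈ Set.Ioo (ε * GammaN m n hs) ((1 - ε) * GammaN m n hs) →
          ∀ A Lam : ℝ → ℝ,
            (∀ c ∈ Set.Ioo 0 (GammaN m n hs),
              A c ∈ Set.Ioo 0 (SigmaN m n hs) ∧ MstarN m n hs (A c) = c) →
            (∀ a ∈ Set.Ico 0 (SigmaN m n hs),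
              0 ≤ Lam a ∧ deriv (Mn m n hs) (Lam a) = a) →
            ∀ x : ℝ, -A (C - 3/4 * Real.log n) < x →
              x < min ((n : ℝ) * sigmaStar μ m lamStar) (SigmaN m n hs) -
                  A (C + 2 * Real.log n) →
              ∃ Lt Lx : ℝ,
                Atil hs ∈ Set.Ioo 0 (SigmaN m n hs) ∧
                MstarN m n hs (Atil hs) +
                    1/2 * Real.log (2 * π * deriv (deriv (Mn m n hs)) Lt) = C ∧
                deriv (Mn m n hs) Lt = Atil hs ∧
                deriv (Mn m n hs) Lx = Atil hs + x ∧
                Atil hs ∈ Set.Icc (A (C - 3/4 * Real.log n)) (A (C + 2 * Real.log n)) ∧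
                Lt ∈ Set.Icc (Lam (A (C - 3/4 * Real.log n)))
                    (Lam (A (C + 2 * Real.log n))) ∧
                Lx ∈ Set.Icc (Lam (A (C - 3/4 * Real.log n) + x))
                    (Lam (A (C + 2 * Real.log n) + x)) := by
  obtain ⟨hε0, hε1⟩ := hε
  obtain ⟨hm1, hm2⟩ := hm
  have h1 : -1 < m := by linarith
  have h2 : m < 1 := by linarith
  obtain ⟨N, hN1, hN⟩ := exists_N hε0
  refine ⟨N, by linarith, fun lamStar _ n hn C => ⟨fun hs => M1 m n hs (TN m n C hs),
    meas_Atil m n C, ?_⟩⟩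
  intro hs hL hC A Lam hA hLam x hx1 hx2
  obtain ⟨hLa, hLb, hLc⟩ := hL
  have hnlog := hN n hn
  have hn1 : (1:ℝ) < n := hN1.trans hn
  have hn0 : (0:ℝ) < n := by linarith
  have hlog0 : 0 < Real.log n := Real.log_pos hn1
  have hhne : ∀ i < n, hs i ≠ 0 := by
    intro i hi h0
    have := hLb i hi
    rw [h0] at this
    have h16 : (0:ℝ) < 16 / ((n : ℝ)^5 * ε^8) := by positivity
    have hz : 2 * π * (0:ℝ) ^ 2 = 0 := by ring
    linarith
  have hM2pos : ∀ l, 0 < M2 m n hs l := by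
    intro l
    refine Finset.sum_pos (fun i hi => ?_) ⟨0, Finset.mem_range.2 (by exact_mod_cast hn0)⟩
    have := hhne i (Finset.mem_range.1 hi)
    have := g2_pos h1 h2 (l * hs i)
    positivity
  have hM2le : ∀ l, 1/2 * Real.log (2 * π * M2 m n hs l) ≤ 3/4 * Real.log n := by
    intro l
    have : 2 * π * M2 m n hs l ≤ (n : ℝ) ^ ((3:ℝ)/2) := by
      refine le_trans ?_ hLa
      have : M2 m n hs l ≤ ∑ i ∈ Finset.range n, (hs i) ^ 2 :=
        Finset.sum_le_sum fun i _ => mul_le_of_le_one_right (sq_nonneg _) (g2_le h1 h2 _)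
      have := Real.pi_pos
      gcongr
    have h := Real.log_le_log (by have := hM2pos l; positivity) this
    rw [Real.log_rpow hn0] at h
    linarith
  have hmono : StrictMono (M1 m n hs) := by
    apply strictMono_of_deriv_pos
    intro l; rw [deriv_M1 h1 h2]; exact hM2pos l
  rw [deriv_Mn h1 h2] at *
  rw [deriv_M1 h1 h2]
  have hΓ := Gamma_ge hε0 hm1 hm2 n hhne
  have hεΓ : n * ε ^ 2 ≤ ε * GammaN m n hs := by nlinarith
  have hnε : 0 < n * ε ^ 2 := by positivity
  have hC1 := hC.1
  have hC2 := hC.2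
  obtain ⟨hA1, hA2⟩ := hA (C - 3/4 * Real.log n) ⟨by linarith, by linarith⟩
  obtain ⟨hB1, hB2⟩ := hA (C + 2 * Real.log n) ⟨by linarith, by linarith⟩
  set a := A (C - 3/4 * Real.log n) with ha
  set b := A (C + 2 * Real.log n) with hb
  obtain ⟨hla0, hla⟩ := hLam a ⟨hA1.1.le, hA1.2⟩
  obtain ⟨hlb0, hlb⟩ := hLam b ⟨hB1.1.le, hB1.2⟩
  have hφa : phiN m n hs (Lam a) = C - 3/4 * Real.log n := by
    rw [← Mstar_eq h1 h2 n hs hmono.monotone, hla, hA2]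
  have hφb : phiN m n hs (Lam b) = C + 2 * Real.log n := by
    rw [← Mstar_eq h1 h2 n hs hmono.monotone, hlb, hB2]
  have hM10 : M1 m n hs 0 = 0 := by
    unfold M1 g1 ea eb
    refine Finset.sum_eq_zero fun i _ => ?_
    simp only [zero_mul, neg_zero, Real.exp_zero]
    ring
  have hφ0 : phiN m n hs 0 = 0 := by
    unfold phiN Mn gfun
    rw [zero_mul, zero_sub, neg_eq_zero]
    refine Finset.sum_eq_zero fun i _ => ?_
    have e : (1 + m) / 2 * (1:ℝ) + (1 - m) / 2 * 1 = 1 := by ring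
    simp only [zero_mul, neg_zero, Real.exp_zero, e, Real.log_one]
  have hlbpos : 0 < Lam b := by
    rw [← hmono.lt_iff_lt, hlb, hM10]; exact hB1.1
  have hM1c : Continuous (M1 m n hs) :=
    continuous_iff_continuousAt.2 fun l => (hasDerivAt_M1 h1 h2 n hs l).continuousAt
  have hMnc : Continuous (Mn m n hs) :=
    continuous_iff_continuousAt.2 fun l => (hasDerivAt_Mn h1 h2 n hs l).continuousAt
  have hM2c : Continuous (M2 m n hs) := by
    unfold M2
    refine continuous_finsetSum _ fun i _ => ?_
    have hg2c : Continuous (g2 m) := by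
      unfold g2
      refine Continuous.div ?_ ?_ ?_
      · have := cont_ea m; have := cont_eb m; fun_prop
      · have := cont_ea m; have := cont_eb m; fun_prop
      · intro y
        have := ea_pos h1 y; have := eb_pos h2 y; positivity
    fun_prop
  have hFc : Continuous (FN m n hs) := by
    unfold FN phiN
    refine Continuous.add (by fun_prop) (continuous_const.mul (Continuous.log (by fun_prop) ?_))
    intro l
    have := hM2pos l
    positivity
  have hF0 : FN m n hs 0 < C := by
    unfold FN; rw [hφ0]; linarith [hM2le 0]
  have hFb : C < FN m n hs (Lam b) := by
    unfold FN; rw [hφb]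
    have hsub := Gamma_sub_le hε0 hm1 hm2 n hhne hlb0
    rw [hφb] at hsub
    set S := ∑ i ∈ Finset.range n, g2 m (Lam b * hs i) with hS
    have hS1 : n * (ε ^ 2 / 4) ≤ 4 / ε ^ 4 * S := by nlinarith
    have hS2 : n * ε ^ 6 / 16 ≤ S := by
      have : n * (ε ^ 2 / 4) * (ε ^ 4 / 4) ≤ 4 / ε ^ 4 * S * (ε ^ 4 / 4) := by gcongr
      have e : 4 / ε ^ 4 * S * (ε ^ 4 / 4) = S := by field_simp
      rw [e] at this
      linarith
    have hlow : 16 / ((n : ℝ)^5 * ε^8) * S ≤ 2 * π * M2 m n hs (Lam b) := by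
      unfold M2
      rw [hS, Finset.mul_sum, Finset.mul_sum]
      refine Finset.sum_le_sum fun i hi => ?_
      rw [← mul_assoc]
      exact mul_le_mul_of_nonneg_right (hLb i (Finset.mem_range.1 hi)) (g2_pos h1 h2 _).le
    have hlow2 : ((n:ℝ) ^ 4)⁻¹ < 2 * π * M2 m n hs (Lam b) := by
      refine lt_of_lt_of_le ?_ hlow
      refine lt_of_lt_of_le ?_ (mul_le_mul_of_nonneg_left hS2 (by positivity))
      have e : 16 / ((n : ℝ)^5 * ε^8) * (n * ε ^ 6 / 16) = ((n:ℝ) ^ 4)⁻¹ * (ε ^ 2)⁻¹ := by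
        field_simp
      rw [e]
      refine lt_mul_of_one_lt_right (by positivity) ?_
      exact (one_lt_inv₀ (by positivity)).2 (by nlinarith)
    have := Real.log_lt_log (by positivity) hlow2
    rw [Real.log_inv, Real.log_pow] at this
    push_cast at this
    linarith
  obtain ⟨hT0, hTb, hTC⟩ := TN_spec hFc hF0 hlbpos hFb
  set T := TN m n C hs with hTdef
  have hTa : Lam a ≤ T := by
    by_contra! hlt
    have := phi_lt h1 h2 n hs hmono hT0 hlt
    unfold FN at hTC
    linarith [hM2le T]
  have haT : a ≤ M1 m n hs T := by rw [← hla]; exact hmono.monotone hTa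
  have hTb' : M1 m n hs T ≤ b := by rw [← hlb]; exact hmono.monotone hTb
  have hx2' : x < SigmaN m n hs - b := by
    have := min_le_right ((n : ℝ) * sigmaStar μ m lamStar) (SigmaN m n hs)
    linarith
  obtain ⟨_, hxa⟩ := hLam (a + x) ⟨by linarith, by linarith⟩
  obtain ⟨_, hxb⟩ := hLam (b + x) ⟨by linarith, by linarith⟩
  obtain ⟨_, hxT⟩ := hLam (M1 m n hs T + x) ⟨by linarith, by linarith⟩
  refine ⟨T, Lam (M1 m n hs T + x), ⟨by linarith [hA1.1], by linarith [hB1.2]⟩, ?_, rfl, hxT,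
    ⟨haT, hTb'⟩, ⟨hTa, hTb⟩, ?_, ?_⟩
  · rw [Mstar_eq h1 h2 n hs hmono.monotone]; exact hTC
  · rw [← hmono.le_iff_le, hxa, hxT]; linarith
  · rw [← hmono.le_iff_le, hxb, hxT]; linarith
end
end
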